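/- (Theorem 3.3, piecewise-linear case) Fix an integer d ≥ 1, m > 0 and x, y ∈ ℝ^d with x ≠ y. Then the finite measures W_{x,y,a} on Γ̃(x,y) converge weakly, as a → 0⁺, to (m²/2)·W_{x,y}. -/

import Mathlib

open MeasureTheory Filter Topology Real Set
open scoped RealInnerProductSpace ENNReal unitInterval

noncomputable section

/-- `ℝ^d` as a Euclidean space. -/
abbrev Ed (d : ℕ) := EuclideanSpace ℝ (Fin d)

/-- The space of continuous paths `[0,1] → ℝ^d`, with the uniform metric. -/
abbrev PathSp (d : ℕ) := C(unitInterval, Ed d)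

instance (d : ℕ) : MeasurableSpace (PathSp d) := borel _
instance (d : ℕ) : BorelSpace (PathSp d) := ⟨rfl⟩

/-- Evaluation of a path at a real time, clamped to `[0,1]`. -/
def evalAt {d : ℕ} (ω : PathSp d) (t : ℝ) : Ed d := ω (Set.projIcc 0 1 zero_le_one t)

/-- `Ω(x)`: continuous paths starting at `x`. -/
abbrev Omega1 {d : ℕ} (x : Ed d) := {ω : PathSp d // ω 0 = x}

/-- `Ω(x,y)`: continuous paths from `x` to `y`. -/
abbrev Omega2 {d : ℕ} (x y : Ed d) := {ω : PathSp d // ω 0 = x ∧ ω 1 = y}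

/-- clamp a real number to `[0,1]`. -/
def clamp01 (r : ℝ) : ℝ := min 1 (max 0 r)

lemma clamp01_of_nonpos {r : ℝ} (h : r ≤ 0) : clamp01 r = 0 := by
  rw [clamp01, max_eq_left h, min_eq_right zero_le_one]

lemma clamp01_of_one_le {r : ℝ} (h : 1 ≤ r) : clamp01 r = 1 := by
  rw [clamp01, max_eq_right (zero_le_one.trans h), min_eq_left h]

lemma clamp01_continuous : Continuous clamp01 :=
  continuous_const.min (continuous_const.max continuous_id)

/-- The piecewise linear path starting at `x` with `N` steps given by the increments `v i`,
the `i`-th step being linearly parametrized by `[i/N, (i+1)/N]`. -/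
def pwLinE {d : ℕ} (x : Ed d) (N : ℕ) (v : Fin N → Ed d) : PathSp d :=
  ⟨fun t => x + ∑ i : Fin N, clamp01 ((N : ℝ) * (t : ℝ) - ((i : ℕ) : ℝ)) • v i, by
    refine continuous_const.add (continuous_finset_sum _ fun i _ => ?_)
    exact ((clamp01_continuous.comp
      ((continuous_const.mul continuous_subtype_val).sub continuous_const)).smul
      continuous_const)⟩

lemma pwLinE_zero {d : ℕ} (x : Ed d) (N : ℕ) (v : Fin N → Ed d) :
    pwLinE x N v 0 = x := by
  show x + ∑ i : Fin N, clamp01 ((N : ℝ) * ((0 : unitInterval) : ℝ) - ((i : ℕ) : ℝ)) • v i = x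
  have h : ∀ i : Fin N, clamp01 ((N : ℝ) * ((0 : unitInterval) : ℝ) - ((i : ℕ) : ℝ)) = 0 := by
    intro i
    apply clamp01_of_nonpos
    have h0 : ((0 : unitInterval) : ℝ) = 0 := rfl
    rw [h0, mul_zero, zero_sub]
    exact neg_nonpos.mpr (Nat.cast_nonneg (i : ℕ))
  simp only [h, zero_smul, Finset.sum_const_zero, add_zero]

lemma pwLinE_one {d : ℕ} (x : Ed d) (N : ℕ) (v : Fin N → Ed d) :
    pwLinE x N v 1 = x + ∑ i : Fin N, v i := by
  show x + ∑ i : Fin N, clamp01 ((N : ℝ) * ((1 : unitInterval) : ℝ) - ((i : ℕ) : ℝ)) • v i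
      = x + ∑ i : Fin N, v i
  have h : ∀ i : Fin N, clamp01 ((N : ℝ) * ((1 : unitInterval) : ℝ) - ((i : ℕ) : ℝ)) = 1 := by
    intro i
    apply clamp01_of_one_le
    have h1 : ((1 : unitInterval) : ℝ) = 1 := rfl
    have h2 : ((i : ℕ) : ℝ) + 1 ≤ (N : ℝ) := by
      exact_mod_cast Nat.succ_le_of_lt i.isLt
    rw [h1, mul_one]; linarith
  simp only [h, one_smul]

/-- Piecewise linear element of `Ω(x)` with increments `v`. -/
def pwLin1 {d : ℕ} (x : Ed d) (N : ℕ) (v : Fin N → Ed d) : Omega1 x :=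
  ⟨pwLinE x N v, pwLinE_zero x N v⟩

/-- Piecewise linear element of `Ω(x,y)` with increments `v` summing to `y - x`. -/
def pwLin2 {d : ℕ} (x y : Ed d) (N : ℕ) (v : Fin N → Ed d)
    (h : x + ∑ i : Fin N, v i = y) : Omega2 x y :=
  ⟨pwLinE x N v, pwLinE_zero x N v, by rw [pwLinE_one, h]⟩

/-- the point preceding `x_i` in the list `x, x_1, …, x_N`. -/
def prevPt {d : ℕ} (x : Ed d) {N : ℕ} (xs : Fin N → Ed d) (i : Fin N) : Ed d :=
  if (i : ℕ) = 0 then x else xs ⟨(i : ℕ) - 1, lt_of_le_of_lt (Nat.pred_le _) i.isLt⟩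

/-- The discrete measure `W_{x,a,N}`, i.e. the measure
`∏_{i=1}^N (2πa²)^{-d/2} exp(-|x_i - x_{i-1}|²/(2a²)) dx_1 … dx_N` (with `x_0 = x`)
on `N`-step piecewise linear paths, placed on `{a²N} × Ω(x) ⊆ ℝ × Ω(x)`.
For `N = 0` this is the Dirac measure at `(0, constant path at x)`. -/
def WxaN {d : ℕ} (x : Ed d) (a : ℝ) (N : ℕ) : Measure (ℝ × Omega1 x) :=
  Measure.map
    (fun xs : Fin N → Ed d =>
      ((a ^ 2 * N : ℝ), pwLin1 x N fun i => xs i - prevPt x xs i))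
    (volume.withDensity fun xs : Fin N → Ed d =>
      ENNReal.ofReal (∏ i : Fin N,
        (2 * π * a ^ 2) ^ (-(d : ℝ) / 2) *
          Real.exp (-‖xs i - prevPt x xs i‖ ^ 2 / (2 * a ^ 2))))

/-- The approximating probability measure
`W_{x,a} = (1 - e^{-m²a²/2}) Σ_{N=0}^∞ e^{-m²a²N/2} W_{x,a,N}`. -/
def Wxa {d : ℕ} (x : Ed d) (m a : ℝ) : Measure (ℝ × Omega1 x) :=
  ENNReal.ofReal (1 - Real.exp (-m ^ 2 * a ^ 2 / 2)) •
    Measure.sum fun N : ℕ =>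
      ENNReal.ofReal (Real.exp (-m ^ 2 * a ^ 2 * N / 2)) • WxaN x a N

/-- The lattice step of length `a` in direction `p.1`, forwards or backwards
according to `p.2`. -/
def stepVec {d : ℕ} (a : ℝ) (p : Fin d × Bool) : Ed d :=
  (if p.2 then a else -a) • EuclideanSpace.single p.1 (1 : ℝ)

/-- The normalized counting measure `V'_{x,a,N}` giving mass `(2d)^{-N}` to each
(piecewise linearly parametrized) `N`-step nearest-neighbour lattice path in `x + aℤ^d`
starting at `x`.  For `N = 0` it is the Dirac measure at the constant path. -/
def VxaN {d : ℕ} (x : Ed d) (a : ℝ) (N : ℕ) : Measure (Omega1 x) :=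
  Measure.sum fun s : Fin N → Fin d × Bool =>
    (((2 * d : ℕ) : ℝ≥0∞) ^ N)⁻¹ •
      Measure.dirac (pwLin1 x N fun i => stepVec a (s i))

/-- The approximating probability measure
`V'_{x,a} = (1 - e^{-m²a²/(2d)}) Σ_{N=0}^∞ e^{-m²a²N/(2d)} V'_{x,a,N}`. -/
def Vxa {d : ℕ} (x : Ed d) (m a : ℝ) : Measure (Omega1 x) :=
  ENNReal.ofReal (1 - Real.exp (-m ^ 2 * a ^ 2 / (2 * d))) •
    Measure.sum fun N : ℕ =>
      ENNReal.ofReal (Real.exp (-m ^ 2 * a ^ 2 * N / (2 * d))) • VxaN x a N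

/-- `Wt` is the family of Wiener measures `(W_x^t)_{t>0}` on `Ω(x)`:
each `W_x^t` is a Borel probability measure, characterized by the characteristic
functions of its finite dimensional distributions
`∫ exp(i Σ_j ξ_j·ω(t_j)) dW_x^t = exp(-(t/2) Σ_j (t_j - t_{j-1}) |ξ_j + ⋯ + ξ_n|²
+ i x·(ξ_1 + ⋯ + ξ_n))` for all `0 = t_0 < t_1 < ⋯ < t_n ≤ 1`. -/
def IsWienerFamily {d : ℕ} (x : Ed d) (Wt : ℝ → Measure (Omega1 x)) : Prop :=
  ∀ t : ℝ, 0 < t → (IsProbabilityMeasure (Wt t) ∧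
    ∀ (n : ℕ) (ts : ℕ → ℝ), ts 0 = 0 → (∀ i < n, ts i < ts (i + 1)) → ts n ≤ 1 →
      ∀ ξ : Fin n → Ed d,
        (∫ ω : Omega1 x, Complex.exp (Complex.I *
            ((∑ i : Fin n, ⟪ξ i, evalAt ω.1 (ts ((i : ℕ) + 1))⟫ : ℝ) : ℂ)) ∂(Wt t))
          = Complex.exp
              (((-(t / 2) * ∑ i : Fin n,
                  (ts ((i : ℕ) + 1) - ts (i : ℕ)) * ‖∑ j ∈ Finset.Ici i, ξ j‖ ^ 2 : ℝ) : ℂ)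
                + Complex.I * ((⟪∑ j, ξ j, x⟫ : ℝ) : ℂ)))


/-- the sequence of points `x, vs 0, …, vs (N-1), y` (with value `y` from index `N+1` on). -/
def pinPts {d : ℕ} (x y : Ed d) {N : ℕ} (vs : Fin N → Ed d) (j : ℕ) : Ed d :=
  if h0 : j = 0 then x else if h : j ≤ N then vs ⟨j - 1, by omega⟩ else y

lemma pinPts_zero {d : ℕ} (x y : Ed d) {N : ℕ} (vs : Fin N → Ed d) :
    pinPts x y vs 0 = x := by simp [pinPts]

lemma pinPts_last {d : ℕ} (x y : Ed d) {N : ℕ} (vs : Fin N → Ed d) :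
    pinPts x y vs (N + 1) = y := by
  have h1 : ¬(N + 1 = 0) := Nat.succ_ne_zero N
  have h2 : ¬(N + 1 ≤ N) := by omega
  simp [pinPts, h1, h2]

lemma pin_telescope {d : ℕ} (x y : Ed d) {N : ℕ} (vs : Fin N → Ed d) :
    x + ∑ i : Fin (N + 1), (pinPts x y vs ((i : ℕ) + 1) - pinPts x y vs (i : ℕ)) = y := by
  rw [Fin.sum_univ_eq_sum_range (fun j => pinPts x y vs (j + 1) - pinPts x y vs j) (N + 1)]
  rw [Finset.sum_range_sub (fun j => pinPts x y vs j) (N + 1)]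
  rw [pinPts_zero, pinPts_last]
  abel

/-- The discrete measure `W_{x,y,a,N+1}`, i.e. the measure
`∏_{i=1}^{N+1} (2πa²)^{-d/2} exp(-|x_i - x_{i-1}|²/(2a²)) dx_1 … dx_N`
(with `x_0 = x`, `x_{N+1} = y`) on `(N+1)`-step piecewise linear paths from `x` to `y`,
placed on `{a²(N+1)} × Ω(x,y) ⊆ ℝ × Ω(x,y)`.  For `N = 0` this is the point mass of
weight `(2πa²)^{-d/2} e^{-|x-y|²/(2a²)}` at `(a², linear path from x to y)`. -/
def WxyaN {d : ℕ} (x y : Ed d) (a : ℝ) (N : ℕ) : Measure (ℝ × Omega2 x y) :=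
  Measure.map
    (fun vs : Fin N → Ed d =>
      ((a ^ 2 * (N + 1) : ℝ),
        pwLin2 x y (N + 1) (fun i => pinPts x y vs ((i : ℕ) + 1) - pinPts x y vs (i : ℕ))
          (pin_telescope x y vs)))
    (volume.withDensity fun vs : Fin N → Ed d =>
      ENNReal.ofReal (∏ i : Fin (N + 1),
        (2 * π * a ^ 2) ^ (-(d : ℝ) / 2) *
          Real.exp (-‖pinPts x y vs ((i : ℕ) + 1) - pinPts x y vs (i : ℕ)‖ ^ 2 /
            (2 * a ^ 2))))

/-- The approximating measure
`W_{x,y,a} = (1 - e^{-m²a²/2}) Σ_{N=1}^∞ e^{-m²a²N/2} W_{x,y,a,N}`. -/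
def Wxya {d : ℕ} (x y : Ed d) (m a : ℝ) : Measure (ℝ × Omega2 x y) :=
  ENNReal.ofReal (1 - Real.exp (-m ^ 2 * a ^ 2 / 2)) •
    Measure.sum fun N : ℕ =>
      ENNReal.ofReal (Real.exp (-m ^ 2 * a ^ 2 * (N + 1) / 2)) • WxyaN x y a N

/-- The measure `V'_{x,y,a,N}` giving mass `a^{-d} (2d)^{-N}` to each
(piecewise linearly parametrized) `N`-step nearest-neighbour lattice path
in `x + aℤ^d` from `x` to `y`. -/
def VxyaN {d : ℕ} (x y : Ed d) (a : ℝ) (N : ℕ) : Measure (Omega2 x y) :=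
  Measure.sum fun s : {s : Fin N → Fin d × Bool // x + ∑ i, stepVec a (s i) = y} =>
    (ENNReal.ofReal (a ^ (-(d : ℝ))) * (((2 * d : ℕ) : ℝ≥0∞) ^ N)⁻¹) •
      Measure.dirac (pwLin2 x y N (fun i => stepVec a (s.1 i)) s.2)

/-- The approximating measure
`V'_{x,y,a} = (1 - e^{-m²a²/(2d)}) Σ_{N=1}^∞ e^{-m²a²N/(2d)} V'_{x,y,a,N}`. -/
def Vxya {d : ℕ} (x y : Ed d) (m a : ℝ) : Measure (Omega2 x y) :=
  ENNReal.ofReal (1 - Real.exp (-m ^ 2 * a ^ 2 / (2 * d))) •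
    Measure.sum fun N : ℕ =>
      ENNReal.ofReal (Real.exp (-m ^ 2 * a ^ 2 * (N + 1) / (2 * d))) • VxyaN x y a (N + 1)

/-- `Wt` is the family of pinned Wiener measures `(W_{x,y}^t)_{t>0}` on `Ω(x,y)`:
finite Borel measures characterized by the characteristic functions of their finite
dimensional distributions: for `0 = t_0 < t_1 < ⋯ < t_n < 1`, with `η_i = ξ_i + ⋯ + ξ_n`,
`∫ exp(i Σ_j ξ_j·ω(t_j)) dW_{x,y}^t = (2πt)^{-d/2} e^{-|x-y|²/(2t)} ·
exp(-(t/2)(Σ_j (t_j - t_{j-1})|η_j|² - |Σ_j t_j ξ_j|²) + i Σ_j ((1-t_j)x + t_j y)·ξ_j)`;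
in particular (`n = 0`) the total mass is the heat kernel `(2πt)^{-d/2} e^{-|x-y|²/(2t)}`. -/
def IsPinnedWienerFamily {d : ℕ} (x y : Ed d) (Wt : ℝ → Measure (Omega2 x y)) : Prop :=
  ∀ t : ℝ, 0 < t → (IsFiniteMeasure (Wt t) ∧
    ∀ (n : ℕ) (ts : ℕ → ℝ), ts 0 = 0 → (∀ i < n, ts i < ts (i + 1)) → ts n < 1 →
      ∀ ξ : Fin n → Ed d,
        (∫ ω : Omega2 x y, Complex.exp (Complex.I *
            ((∑ i : Fin n, ⟪ξ i, evalAt ω.1 (ts ((i : ℕ) + 1))⟫ : ℝ) : ℂ)) ∂(Wt t))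
          = (((2 * π * t) ^ (-(d : ℝ) / 2) * Real.exp (-‖x - y‖ ^ 2 / (2 * t)) : ℝ) : ℂ) *
            Complex.exp
              (((-(t / 2) *
                  ((∑ i : Fin n,
                      (ts ((i : ℕ) + 1) - ts (i : ℕ)) * ‖∑ j ∈ Finset.Ici i, ξ j‖ ^ 2)
                    - ‖∑ i : Fin n, ts ((i : ℕ) + 1) • ξ i‖ ^ 2) : ℝ) : ℂ)
                + Complex.I *
                  ((∑ i : Fin n,
                    ⟪ξ i, (1 - ts ((i : ℕ) + 1)) • x + ts ((i : ℕ) + 1) • y⟫ : ℝ) : ℂ)))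

/-!
A walk with Gaussian steps of variance `s`, sheared so as to run from `x` to `y`, has exactly the
law of a pinned Wiener path of duration `s * N` observed at the `N - 1` interior points of the
equispaced partition: both are determined by their characteristic functions, which agree after
summation by parts. Hence `W_{x,y,a,N}` is the image of `W_{x,y}^{a²N}` under sampling a path and
interpolating the samples linearly. Brownian scaling writes every `W_{x,y}^t` as an image of the
single measure `W_{x,y}^1`, and since interpolated samples converge uniformly to the path,
dominated convergence gives `∫ f dW_{x,y,a,N} → ∫ f(t, ·) dW_{x,y}^t` as `a → 0`, `a²N → t`.

The sum over `N` is a Riemann sum of mesh `a²` in `t = a²N`, so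
`a² ∑ e^{-m²a²N/2} W_{x,y,a,N}` converges to `W_{x,y}`, while `(1 - e^{-m²a²/2}) / a² → m²/2`.
The heat kernel at `x - y ≠ 0` stays bounded as `t → 0`, which gives the domination.
-/

section Walk

open Fin (partialSum)

lemma measurable_partialSum {G : Type*} [AddMonoid G] [MeasurableSpace G] [MeasurableAdd₂ G]
    {n : ℕ} (k : Fin (n + 1)) : Measurable fun v : Fin n → G => partialSum v k := by
  induction k using Fin.induction with
  | zero => simp
  | succ k ih =>
    simp only [Fin.partialSum_succ]
    exact ih.add (measurable_pi_apply k)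

lemma measurePreserving_partialSum {G : Type*} [AddGroup G] [MeasurableSpace G]
    [MeasurableAdd₂ G] (μ : Measure G) [SigmaFinite μ] [μ.IsAddLeftInvariant] (n : ℕ) :
    MeasurePreserving (fun (v : Fin n → G) (k : Fin n) => partialSum v k.succ)
      (Measure.pi fun _ => μ) (Measure.pi fun _ => μ) := by
  induction n with
  | zero =>
    convert MeasurePreserving.id (Measure.pi fun _ : Fin 0 => μ) using 1
  | succ n ih =>
    have he := measurePreserving_piFinSuccAbove (fun _ : Fin (n + 1) => μ) 0
    have hskew : MeasurePreserving
        (fun p : G × (Fin n → G) => (p.1, fun k : Fin n => p.1 + partialSum p.2 k.succ))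
        (μ.prod (Measure.pi fun _ => μ)) (μ.prod (Measure.pi fun _ => μ)) := by
      refine (MeasurePreserving.id μ).skew_product (μc := Measure.pi fun _ => μ)
        (g := fun c (v : Fin n → G) k => c + partialSum v (Fin.succ k))
        ?_ (ae_of_all _ fun c => ?_)
      · exact measurable_pi_lambda _ fun k =>
          measurable_fst.add ((measurable_partialSum k.succ).comp measurable_snd)
      · exact ((measurePreserving_pi (fun _ => μ) (fun _ => μ)
          fun _ => measurePreserving_add_left μ c).comp ih).map_eq
    convert he.symm.comp (hskew.comp he) using 1
    funext v k
    rw [Fin.partialSum_succ']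
    cases k using Fin.cases <;> simp [MeasurableEquiv.piFinSuccAbove, Fin.insertNthEquiv]

lemma partialSum_last {M : Type*} [AddCommMonoid M] {n : ℕ} (v : Fin n → M) :
    partialSum v (Fin.last n) = ∑ i, v i := by
  simp [partialSum, List.take_of_length_le, List.sum_ofFn]

lemma measurePreserving_sum_prodMk_partialSum {G : Type*} [AddCommGroup G] [MeasurableSpace G]
    [MeasurableAdd₂ G] (μ : Measure G) [SigmaFinite μ] [μ.IsAddLeftInvariant] (n : ℕ) :
    MeasurePreserving
      (fun v : Fin (n + 1) → G => (∑ i, v i, fun k : Fin n => partialSum v k.castSucc.succ))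
      (Measure.pi fun _ => μ) (μ.prod (Measure.pi fun _ => μ)) := by
  convert (measurePreserving_piFinSuccAbove (fun _ : Fin (n + 1) => μ) (Fin.last n)).comp
    (measurePreserving_partialSum μ (n + 1)) using 1
  funext v
  simp [MeasurableEquiv.piFinSuccAbove, Fin.insertNthEquiv, ← partialSum_last, funext_iff,
    Fin.init]

/-- The bridge from `x` to `y` obtained from a walk with `N + 1` steps `v` by shearing away its
displacement: only the `N` interior points are recorded. -/
def walkBridge {E : Type*} [AddCommGroup E] [Module ℝ E] (x y : E) {N : ℕ} (v : Fin (N + 1) → E)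
    (k : Fin N) : E :=
  partialSum v k.castSucc.succ + (x - (((k : ℝ) + 1) / (N + 1)) • (∑ i, v i - (y - x)))

lemma measurePreserving_walkBridge {E : Type*} [NormedAddCommGroup E] [NormedSpace ℝ E]
    [MeasurableSpace E] [BorelSpace E] [SecondCountableTopology E] (μ : Measure E) [SigmaFinite μ]
    [μ.IsAddLeftInvariant] (x y : E) (N : ℕ) :
    MeasurePreserving (fun v : Fin (N + 1) → E => (∑ i, v i, walkBridge x y v))
      (Measure.pi fun _ => μ) (μ.prod (Measure.pi fun _ => μ)) := by
  have hshear : MeasurePreserving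
      (fun p : E × (Fin N → E) => (p.1, p.2 + fun k : Fin N =>
        x - (((k : ℝ) + 1) / (N + 1)) • (p.1 - (y - x))))
      (μ.prod (Measure.pi fun _ => μ)) (μ.prod (Measure.pi fun _ => μ)) :=
    (MeasurePreserving.id μ).skew_product
      (g := fun z q => q + fun k : Fin N => x - (((k : ℝ) + 1) / (N + 1)) • (z - (y - x)))
      (Continuous.measurable (by fun_prop))
      (ae_of_all _ fun z => (measurePreserving_add_right _ _).map_eq)
  exact hshear.comp (measurePreserving_sum_prodMk_partialSum μ N)

end Walk

section Increments

variable {d N : ℕ} (x y : Ed d)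

/-- The `i`-th increment of the path `x, vs 0, …, vs (N-1), y`. -/
def pinInc (vs : Fin N → Ed d) (i : Fin (N + 1)) : Ed d :=
  pinPts x y vs ((i : ℕ) + 1) - pinPts x y vs (i : ℕ)

lemma sum_pinInc (vs : Fin N → Ed d) : ∑ i, pinInc x y vs i = y - x :=
  eq_sub_of_add_eq' (pin_telescope x y vs)

lemma pinPts_succ (vs : Fin N → Ed d) (j : Fin N) : pinPts x y vs ((j : ℕ) + 1) = vs j := by
  simp [pinPts, Nat.succ_le_of_lt j.isLt]

lemma continuous_pinInc (i : Fin (N + 1)) :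
    Continuous fun vs : Fin N → Ed d => pinInc x y vs i := by
  unfold pinInc pinPts
  split_ifs <;> fun_prop

lemma pinPts_walkBridge (v : Fin (N + 1) → Ed d) (k : Fin (N + 2)) :
    pinPts x y (walkBridge x y v) k
      = Fin.partialSum v k + (x - ((k : ℝ) / (N + 1)) • (∑ i, v i - (y - x))) := by
  cases k using Fin.cases with
  | zero => simp [pinPts_zero]
  | succ k =>
    cases k using Fin.lastCases with
    | last =>
      have hN : (N : ℝ) + 1 ≠ 0 := by positivity
      rw [Fin.succ_last, partialSum_last, Fin.val_last, pinPts_last, Nat.cast_succ, div_self hN,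
        one_smul]
      abel
    | cast k => simp [pinPts_succ, walkBridge]

lemma pinInc_walkBridge (v : Fin (N + 1) → Ed d) (i : Fin (N + 1)) :
    pinInc x y (walkBridge x y v) i = v i - ((N : ℝ) + 1)⁻¹ • (∑ i, v i - (y - x)) := by
  have hsucc := pinPts_walkBridge x y v i.succ
  have hcast := pinPts_walkBridge x y v i.castSucc
  rw [Fin.val_succ, Fin.partialSum_succ] at hsucc
  rw [Fin.val_castSucc] at hcast
  rw [pinInc, hsucc, hcast]
  push_cast
  module

end Increments

section Frequencies

variable {E : Type*} {N : ℕ}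

/-- The tail sum `∑_{j ≥ i} ξ_j`, where `i` may also be `N`: summation by parts turns the
frequencies `ξ` at the interior points of a path into frequencies at its increments. -/
def tailSum [AddCommMonoid E] (ξ : Fin N → E) (i : Fin (N + 1)) : E :=
  ∑ j with i ≤ j.castSucc, ξ j

lemma tailSum_castSucc [AddCommMonoid E] (ξ : Fin N → E) (i : Fin N) :
    tailSum ξ i.castSucc = ∑ j ∈ Finset.Ici i, ξ j := by
  simp [tailSum, Finset.filter_le_eq_Ici]

lemma tailSum_last [AddCommMonoid E] (ξ : Fin N → E) : tailSum ξ (Fin.last N) = 0 :=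
  Finset.sum_eq_zero fun j hj => by
    simp [Fin.last_le_iff] at hj

lemma sum_tailSum [AddCommMonoid E] (ξ : Fin N → E) :
    ∑ i, tailSum ξ i = ∑ j : Fin N, ((j : ℕ) + 1) • ξ j := by
  simp only [tailSum]
  rw [Finset.sum_comm' (t' := Finset.univ) (s' := fun j => Finset.Iic j.castSucc) (by simp)]
  simp

lemma sum_Iic_castSucc_sub {G : Type*} [AddCommGroup G] (p : ℕ → G) (j : Fin N) :
    ∑ i ∈ Finset.Iic j.castSucc, (p ((i : ℕ) + 1) - p (i : ℕ)) = p ((j : ℕ) + 1) - p 0 := by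
  rw [← Finset.sum_range_sub, Nat.range_succ_eq_Iic, ← Fin.val_castSucc j,
    ← Fin.map_valEmbedding_Iic, Finset.sum_map]
  rfl

variable [NormedAddCommGroup E] [InnerProductSpace ℝ E]

lemma sum_inner_tailSum_sub (ξ : Fin N → E) (p : ℕ → E) :
    ∑ i : Fin (N + 1), ⟪tailSum ξ i, p ((i : ℕ) + 1) - p (i : ℕ)⟫
      = ∑ j : Fin N, ⟪ξ j, p ((j : ℕ) + 1) - p 0⟫ := by
  simp only [tailSum, sum_inner]
  rw [Finset.sum_comm' (t' := Finset.univ) (s' := fun j => Finset.Iic j.castSucc) (by simp)]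
  simp only [← inner_sum, sum_Iic_castSucc_sub]

lemma sum_norm_sq_add_const {ι : Type*} [Fintype ι] (w : ι → E) (c : E) :
    ∑ i, ‖w i + c‖ ^ 2 = ∑ i, ‖w i‖ ^ 2 + 2 * ⟪∑ i, w i, c⟫ + Fintype.card ι * ‖c‖ ^ 2 := by
  simp only [norm_add_sq_real, Finset.sum_add_distrib, sum_inner, Finset.mul_sum]
  simp

/-- The mean of a bridge from `x` to `y` at the times `(k + 1) / (N + 1)`. -/
def bridgeMean (x y : E) (k : Fin N) : E :=
  (1 - ((k : ℝ) + 1) / (N + 1)) • x + (((k : ℝ) + 1) / (N + 1)) • y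

/-- The variance of `∑ k, ⟪ξ k, ω ((k + 1) / (N + 1))⟫` for a standard Brownian bridge `ω` of
duration one. -/
def bridgeVariance (ξ : Fin N → E) : ℝ :=
  ∑ i : Fin N, ((N : ℝ) + 1)⁻¹ * ‖∑ j ∈ Finset.Ici i, ξ j‖ ^ 2
    - ‖∑ k : Fin N, (((k : ℝ) + 1) / (N + 1)) • ξ k‖ ^ 2

/-- The frequencies at the increments of a bridge which correspond to the frequencies `ξ` at its
interior points, normalized to have sum zero. -/
def bridgeFreq (ξ : Fin N → E) (i : Fin (N + 1)) : E :=
  tailSum ξ i - ∑ k : Fin N, (((k : ℝ) + 1) / (N + 1)) • ξ k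

lemma sum_tailSum_eq_smul (ξ : Fin N → E) :
    ∑ i, tailSum ξ i = ((N : ℝ) + 1) • ∑ k : Fin N, (((k : ℝ) + 1) / (N + 1)) • ξ k := by
  have hN : (N : ℝ) + 1 ≠ 0 := by positivity
  rw [sum_tailSum, Finset.smul_sum]
  refine Finset.sum_congr rfl fun k _ => ?_
  rw [smul_smul, mul_div_cancel₀ _ hN, ← Nat.cast_smul_eq_nsmul ℝ, Nat.cast_add_one]

lemma sum_bridgeFreq (ξ : Fin N → E) : ∑ i, bridgeFreq ξ i = 0 := by
  simp only [bridgeFreq, Finset.sum_sub_distrib, sum_tailSum_eq_smul, Finset.sum_const,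
    Finset.card_univ, Fintype.card_fin, ← Nat.cast_smul_eq_nsmul ℝ, Nat.cast_add_one, sub_self]

lemma sum_norm_sq_bridgeFreq (ξ : Fin N → E) :
    ∑ i, ‖bridgeFreq ξ i‖ ^ 2 = (N + 1) * bridgeVariance ξ := by
  have hN : (N : ℝ) + 1 ≠ 0 := by positivity
  have htail : ∑ i, ‖tailSum ξ i‖ ^ 2 = ∑ i : Fin N, ‖∑ j ∈ Finset.Ici i, ξ j‖ ^ 2 := by
    simp [Fin.sum_univ_castSucc, tailSum_castSucc, tailSum_last]
  simp only [bridgeFreq, sub_eq_add_neg]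
  rw [sum_norm_sq_add_const, sum_tailSum_eq_smul, inner_neg_right, real_inner_smul_left,
    real_inner_self_eq_norm_sq, norm_neg, htail, bridgeVariance, ← Finset.mul_sum,
    Fintype.card_fin]
  field_simp
  push_cast
  ring

lemma sum_inner_bridgeFreq_pinInc {d : ℕ} (x y : Ed d) (vs ξ : Fin N → Ed d) :
    ∑ i, ⟪bridgeFreq ξ i, pinInc x y vs i⟫ = ∑ k, ⟪ξ k, vs k⟫ - ∑ k, ⟪ξ k, bridgeMean x y k⟫ := by
  have htail : ∑ i, ⟪tailSum ξ i, pinInc x y vs i⟫ = ∑ k, ⟪ξ k, vs k - x⟫ := by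
    simpa only [pinInc, pinPts_succ, pinPts_zero] using sum_inner_tailSum_sub ξ (pinPts x y vs)
  simp only [bridgeFreq, inner_sub_left, Finset.sum_sub_distrib, ← inner_sum, sum_pinInc, htail]
  rw [sum_inner, ← Finset.sum_sub_distrib, ← Finset.sum_sub_distrib]
  refine Finset.sum_congr rfl fun k _ => ?_
  rw [bridgeMean, real_inner_smul_left, ← inner_smul_right, ← inner_sub_right, ← inner_sub_right]
  congr 1
  module

end Frequencies

section HeatKernel

variable {E : Type*} [NormedAddCommGroup E] [InnerProductSpace ℝ E]

/-- The heat kernel `(2πt)^{-dim E/2} e^{-‖v‖²/(2t)}`, the Gaussian density of variance `t`. -/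
def heatKernel (t : ℝ) (v : E) : ℝ :=
  (2 * π * t) ^ (-(Module.finrank ℝ E : ℝ) / 2) * Real.exp (-‖v‖ ^ 2 / (2 * t))

lemma heatKernel_pos {t : ℝ} (ht : 0 < t) (v : E) : 0 < heatKernel t v := by
  unfold heatKernel
  positivity

lemma continuous_heatKernel (t : ℝ) : Continuous (heatKernel t : E → ℝ) := by
  unfold heatKernel
  fun_prop

lemma continuousAt_heatKernel {t : ℝ} (ht : 0 < t) (v : E) :
    ContinuousAt (fun t => heatKernel t v) t := by
  unfold heatKernel
  refine .mul (.rpow_const (by fun_prop) (.inl (by positivity))) ?_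
  exact .rexp (.div (by fun_prop) (by fun_prop) (by positivity))

lemma exists_heatKernel_le {v : E} (hv : v ≠ 0) : ∃ C, ∀ t > 0, heatKernel t v ≤ C := by
  set p : ℝ := (Module.finrank ℝ E : ℝ) / 2 with hp
  refine ⟨(π * ‖v‖ ^ 2) ^ (-p) * p ^ p, fun t ht => ?_⟩
  set u := ‖v‖ ^ 2 / (2 * t) with hu
  have hu0 : 0 < u := by positivity
  have hup : u ^ p * Real.exp (-u) ≤ p ^ p := by
    rw [Real.exp_neg, ← div_eq_mul_inv, div_le_iff₀ (Real.exp_pos u)]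
    simpa [abs_of_pos hu0] using
      ProbabilityTheory.rpow_abs_le_mul_exp_abs u (p := p) (by positivity) one_ne_zero
  have hbase : 2 * π * t = π * ‖v‖ ^ 2 / u := by
    rw [hu]
    field_simp
  calc heatKernel t v = (π * ‖v‖ ^ 2) ^ (-p) * (u ^ p * Real.exp (-u)) := by
        rw [heatKernel, neg_div, neg_div, ← hp, ← hu, hbase, div_rpow (by positivity) hu0.le,
          rpow_neg hu0.le, div_inv_eq_mul, mul_assoc]
    _ ≤ (π * ‖v‖ ^ 2) ^ (-p) * p ^ p := by gcongr

variable {ι : Type*} [Fintype ι]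

lemma prod_heatKernel (s : ℝ) (w : ι → E) :
    ∏ i, heatKernel s (w i)
      = ((2 * π * s) ^ (-(Module.finrank ℝ E : ℝ) / 2)) ^ Fintype.card ι *
        Real.exp (-(∑ i, ‖w i‖ ^ 2) / (2 * s)) := by
  simp only [heatKernel, Finset.prod_mul_distrib, Finset.prod_const, Finset.card_univ,
    ← Real.exp_sum, ← Finset.sum_div, Finset.sum_neg_distrib]

lemma prod_heatKernel_add_const [Nonempty ι] {s : ℝ} (hs : s ≠ 0) (w : ι → E) (c : E) :
    (∏ i, heatKernel s (w i + c)) * heatKernel (s * Fintype.card ι) (∑ i, w i)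
      = heatKernel (s * Fintype.card ι) (∑ i, w i + (Fintype.card ι : ℝ) • c) *
        ∏ i, heatKernel s (w i) := by
  have hcard : (Fintype.card ι : ℝ) ≠ 0 := by simp
  have hexp : Real.exp (-(∑ i, ‖w i + c‖ ^ 2) / (2 * s)) *
        Real.exp (-‖∑ i, w i‖ ^ 2 / (2 * (s * Fintype.card ι)))
      = Real.exp (-‖∑ i, w i + (Fintype.card ι : ℝ) • c‖ ^ 2 / (2 * (s * Fintype.card ι))) *
        Real.exp (-(∑ i, ‖w i‖ ^ 2) / (2 * s)) := by
    rw [← Real.exp_add, ← Real.exp_add, sum_norm_sq_add_const, norm_add_sq_real,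
      inner_smul_right, norm_smul, mul_pow, Real.norm_eq_abs, sq_abs]
    congr 1
    field_simp
    ring
  rw [prod_heatKernel, prod_heatKernel, heatKernel, heatKernel, mul_mul_mul_comm, hexp]
  ring

variable [FiniteDimensional ℝ E] [MeasurableSpace E] [BorelSpace E]

lemma integral_heatKernel_mul_cexp {s : ℝ} (hs : 0 < s) (θ : E) :
    ∫ v : E, (heatKernel s v : ℂ) * Complex.exp (Complex.I * (⟪θ, v⟫ : ℝ))
      = Complex.exp ((-(s / 2) * ‖θ‖ ^ 2 : ℝ) : ℂ) := by
  set p : ℝ := (Module.finrank ℝ E : ℝ) / 2 with hp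
  have hre : 0 < (((2 * s)⁻¹ : ℝ) : ℂ).re := by
    rw [Complex.ofReal_re]
    positivity
  have hpos : 0 < 2 * π * s := by positivity
  have hgauss : ∀ v : E, (heatKernel s v : ℂ) * Complex.exp (Complex.I * (⟪θ, v⟫ : ℝ))
      = (((2 * π * s) ^ (-p) : ℝ) : ℂ) *
        Complex.exp (-(((2 * s)⁻¹ : ℝ) : ℂ) * (‖v‖ : ℂ) ^ 2 + Complex.I * (⟪θ, v⟫ : ℝ)) := by
    intro v
    rw [heatKernel, neg_div, ← hp, Complex.exp_add, Complex.ofReal_mul, mul_assoc,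
      Complex.ofReal_exp]
    congr 3
    push_cast
    field_simp
  have hbase : (π : ℂ) / (((2 * s)⁻¹ : ℝ) : ℂ) = ((2 * π * s : ℝ) : ℂ) := by
    push_cast
    field_simp
  have hdim : ((Module.finrank ℝ E : ℂ) / 2) = (p : ℂ) := by
    push_cast [hp]
    rfl
  simp_rw [hgauss]
  rw [integral_const_mul, GaussianFourier.integral_cexp_neg_mul_sq_norm_add hre Complex.I θ,
    hbase, hdim, ← Complex.ofReal_cpow hpos.le, ← mul_assoc, ← Complex.ofReal_mul,
    ← rpow_add hpos, neg_add_cancel, rpow_zero, Complex.ofReal_one, one_mul, Complex.I_sq]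
  congr 1
  push_cast
  field_simp
  norm_num

lemma integral_heatKernel {s : ℝ} (hs : 0 < s) : ∫ v : E, heatKernel s v = 1 := by
  have h := integral_heatKernel_mul_cexp hs (0 : E)
  simp only [inner_zero_left, Complex.ofReal_zero, mul_zero, Complex.exp_zero, mul_one,
    norm_zero, ne_eq, OfNat.ofNat_ne_zero, not_false_eq_true, zero_pow] at h
  exact_mod_cast integral_complex_ofReal.symm.trans h

lemma integral_prod_heatKernel_mul_cexp {s : ℝ} (hs : 0 < s) (θ : ι → E) :
    ∫ v : ι → E, ((∏ i, heatKernel s (v i) : ℝ) : ℂ) *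
        Complex.exp (Complex.I * (∑ i, ⟪θ i, v i⟫ : ℝ))
      = Complex.exp ((-(s / 2) * ∑ i, ‖θ i‖ ^ 2 : ℝ) : ℂ) := by
  have hprod : ∀ v : ι → E, ((∏ i, heatKernel s (v i) : ℝ) : ℂ) *
        Complex.exp (Complex.I * (∑ i, ⟪θ i, v i⟫ : ℝ))
      = ∏ i, ((heatKernel s (v i) : ℂ) * Complex.exp (Complex.I * (⟪θ i, v i⟫ : ℝ))) := by
    intro v
    rw [Finset.prod_mul_distrib, ← Complex.exp_sum, ← Finset.mul_sum]
    push_cast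
    rfl
  simp_rw [hprod]
  rw [integral_fintype_prod_volume_eq_prod (fun i (v : E) =>
    (heatKernel s v : ℂ) * Complex.exp (Complex.I * (⟪θ i, v⟫ : ℝ)))]
  simp_rw [integral_heatKernel_mul_cexp hs]
  rw [← Complex.exp_sum, Finset.mul_sum]
  push_cast
  rfl

end HeatKernel

section DiscreteBridge

lemma integral_heatKernel_sum_mul_walkBridge {E : Type*} [NormedAddCommGroup E]
    [InnerProductSpace ℝ E] [FiniteDimensional ℝ E] [MeasurableSpace E] [BorelSpace E] (x y : E)
    {N : ℕ} {t : ℝ} (ht : 0 < t) {F : (Fin N → E) → ℂ} (hF : AEStronglyMeasurable F volume) :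
    ∫ v : Fin (N + 1) → E, (heatKernel t (∑ i, v i) : ℂ) * F (walkBridge x y v)
      = ∫ vs, F vs := by
  have hmp : MeasurePreserving (fun v : Fin (N + 1) → E => (∑ i, v i, walkBridge x y v)) volume
      (volume.prod volume) := measurePreserving_walkBridge volume x y N
  have hmeas : AEStronglyMeasurable
      (fun p : E × (Fin N → E) => (heatKernel t p.1 : ℂ) * F p.2)
      (volume.prod volume) :=
    (Complex.continuous_ofReal.comp
      (continuous_heatKernel t)).aestronglyMeasurable.comp_fst.mul hF.comp_snd
  calc ∫ v : Fin (N + 1) → E, (heatKernel t (∑ i, v i) : ℂ) * F (walkBridge x y v)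
      = ∫ p : E × (Fin N → E), (heatKernel t p.1 : ℂ) * F p.2 ∂volume.prod volume := by
        rw [← hmp.map_eq] at hmeas ⊢
        rw [integral_map hmp.aemeasurable hmeas]
    _ = (∫ z : E, (heatKernel t z : ℂ)) * ∫ vs, F vs := by
        rw [← integral_prod_mul]
    _ = ∫ vs, F vs := by
        rw [integral_complex_ofReal, integral_heatKernel ht, Complex.ofReal_one, one_mul]

variable {d N : ℕ} (x y : Ed d) {s : ℝ}

/-- The endpoint `∑ v` of a Gaussian walk is independent of its bridge part. -/
lemma prod_heatKernel_pinInc_walkBridge (hs : 0 < s) (v : Fin (N + 1) → Ed d) :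
    heatKernel (s * (N + 1)) (∑ i, v i) * ∏ i, heatKernel s (pinInc x y (walkBridge x y v) i)
      = heatKernel (s * (N + 1)) (y - x) * ∏ i, heatKernel s (v i) := by
  have hN : (N : ℝ) + 1 ≠ 0 := by positivity
  have h := prod_heatKernel_add_const hs.ne' v (-((N : ℝ) + 1)⁻¹ • (∑ i, v i - (y - x)))
  rw [Fintype.card_fin, Nat.cast_add_one, smul_smul, mul_neg, mul_inv_cancel₀ hN, neg_one_smul,
    ← sub_eq_add_neg, sub_sub_cancel] at h
  simpa only [pinInc_walkBridge, neg_smul, ← sub_eq_add_neg, mul_comm] using h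

lemma integral_prod_heatKernel_pinInc_mul_cexp (hs : 0 < s) {θ : Fin (N + 1) → Ed d}
    (hθ : ∑ i, θ i = 0) :
    ∫ vs : Fin N → Ed d, ((∏ i, heatKernel s (pinInc x y vs i) : ℝ) : ℂ) *
        Complex.exp (Complex.I * (∑ i, ⟪θ i, pinInc x y vs i⟫ : ℝ))
      = (heatKernel (s * (N + 1)) (y - x) : ℂ) *
        Complex.exp ((-(s / 2) * ∑ i, ‖θ i‖ ^ 2 : ℝ) : ℂ) := by
  have hcont : Continuous fun vs : Fin N → Ed d =>
      ((∏ i, heatKernel s (pinInc x y vs i) : ℝ) : ℂ) *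
        Complex.exp (Complex.I * (∑ i, ⟪θ i, pinInc x y vs i⟫ : ℝ)) := by
    have := continuous_heatKernel (E := Ed d) s
    have := continuous_pinInc (N := N) x y
    fun_prop
  have hphase : ∀ v : Fin (N + 1) → Ed d,
      ∑ i, ⟪θ i, pinInc x y (walkBridge x y v) i⟫ = ∑ i, ⟪θ i, v i⟫ := fun v => by
    simp only [pinInc_walkBridge, inner_sub_right, Finset.sum_sub_distrib, ← sum_inner, hθ,
      inner_zero_left, sub_zero]
  have hT : 0 < s * ((N : ℝ) + 1) := by positivity
  rw [← integral_heatKernel_sum_mul_walkBridge x y hT hcont.aestronglyMeasurable]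
  simp_rw [hphase, ← mul_assoc, ← Complex.ofReal_mul, prod_heatKernel_pinInc_walkBridge x y hs,
    Complex.ofReal_mul (heatKernel (s * (N + 1)) (y - x)), mul_assoc]
  rw [integral_const_mul, integral_prod_heatKernel_mul_cexp hs]

/-- The law of the interior points of the Gaussian bridge from `x` to `y` with `N + 1` steps of
variance `s`, weighted by the heat kernel: `∏ p_s(x_{i+1} - x_i) dx_1 … dx_N`. -/
def bridgeMeasure (s : ℝ) (N : ℕ) : Measure (Fin N → Ed d) :=
  volume.withDensity fun vs => ENNReal.ofReal (∏ i, heatKernel s (pinInc x y vs i))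

lemma continuous_prod_heatKernel_pinInc (s : ℝ) (N : ℕ) :
    Continuous fun vs : Fin N → Ed d => ∏ i, heatKernel s (pinInc x y vs i) :=
  continuous_finsetProd _ fun i _ => (continuous_heatKernel s).comp (continuous_pinInc x y i)

lemma bridgeMeasure_univ (hs : 0 < s) :
    bridgeMeasure x y s N univ = ENNReal.ofReal (heatKernel (s * (N + 1)) (y - x)) := by
  have hT : 0 < s * ((N : ℝ) + 1) := by positivity
  have hint : ∫ vs : Fin N → Ed d, ∏ i, heatKernel s (pinInc x y vs i)
      = heatKernel (s * (N + 1)) (y - x) := by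
    have h := integral_prod_heatKernel_pinInc_mul_cexp x y hs (N := N) (θ := 0) (by simp)
    simp only [Pi.zero_apply, inner_zero_left, norm_zero, Finset.sum_const_zero,
      Complex.ofReal_zero, mul_zero, Complex.exp_zero, mul_one, ne_eq, OfNat.ofNat_ne_zero,
      not_false_eq_true, zero_pow] at h
    exact_mod_cast integral_complex_ofReal.symm.trans h
  rw [bridgeMeasure, withDensity_apply _ .univ, setLIntegral_univ, ← hint,
    ofReal_integral_eq_lintegral_ofReal]
  · exact .of_integral_ne_zero (hint ▸ (heatKernel_pos hT _).ne')
  · exact ae_of_all _ fun vs => Finset.prod_nonneg fun i _ => (heatKernel_pos hs _).le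

lemma isFiniteMeasure_bridgeMeasure (hs : 0 < s) : IsFiniteMeasure (bridgeMeasure x y s N) :=
  ⟨by simp [bridgeMeasure_univ x y hs]⟩

lemma integral_cexp_bridgeMeasure (hs : 0 < s) (ξ : Fin N → Ed d) :
    ∫ vs, Complex.exp (Complex.I * (∑ k, ⟪ξ k, vs k⟫ : ℝ)) ∂bridgeMeasure x y s N
      = (heatKernel (s * (N + 1)) (y - x) : ℂ) *
        Complex.exp (((-(s * (N + 1) / 2) * bridgeVariance ξ : ℝ) : ℂ)
          + Complex.I * (∑ k, ⟪ξ k, bridgeMean x y k⟫ : ℝ)) := by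
  have hphase : ∀ vs : Fin N → Ed d, Complex.exp (Complex.I * (∑ k, ⟪ξ k, vs k⟫ : ℝ))
      = Complex.exp (Complex.I * (∑ i, ⟪bridgeFreq ξ i, pinInc x y vs i⟫ : ℝ)) *
        Complex.exp (Complex.I * (∑ k, ⟪ξ k, bridgeMean x y k⟫ : ℝ)) := by
    intro vs
    rw [sum_inner_bridgeFreq_pinInc, ← Complex.exp_add, ← mul_add, ← Complex.ofReal_add,
      sub_add_cancel]
  have hdensity : Measurable fun vs : Fin N → Ed d =>
      ENNReal.ofReal (∏ i, heatKernel s (pinInc x y vs i)) :=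
    (continuous_prod_heatKernel_pinInc x y s N).measurable.ennreal_ofReal
  have hpos : ∀ vs : Fin N → Ed d, 0 ≤ ∏ i, heatKernel s (pinInc x y vs i) := fun vs =>
    Finset.prod_nonneg fun i _ => (heatKernel_pos hs _).le
  rw [funext hphase, bridgeMeasure, integral_withDensity_eq_integral_toReal_smul hdensity
    (ae_of_all _ fun _ => ENNReal.ofReal_lt_top)]
  simp_rw [ENNReal.toReal_ofReal (hpos _), Complex.real_smul, ← mul_assoc]
  rw [integral_mul_const, integral_prod_heatKernel_pinInc_mul_cexp x y hs (sum_bridgeFreq ξ),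
    sum_norm_sq_bridgeFreq, Complex.exp_add, mul_assoc, ← mul_assoc (-(s / 2)),
    neg_mul (s / 2), div_mul_eq_mul_div]

end DiscreteBridge

lemma ext_of_integral_cexp_sum_inner {ι H : Type*} [Fintype ι] [NormedAddCommGroup H]
    [InnerProductSpace ℝ H] [CompleteSpace H] [SecondCountableTopology H] [MeasurableSpace H]
    [BorelSpace H] {μ ν : Measure (ι → H)} [IsFiniteMeasure μ] [IsFiniteMeasure ν]
    (h : ∀ ξ : ι → H, ∫ v, Complex.exp (Complex.I * (∑ j, ⟪ξ j, v j⟫ : ℝ)) ∂μ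
      = ∫ v, Complex.exp (Complex.I * (∑ j, ⟪ξ j, v j⟫ : ℝ)) ∂ν) : μ = ν := by
  classical
  refine Measure.ext_of_charFunDual (funext fun L => ?_)
  let ξ : ι → H := fun j =>
    (InnerProductSpace.toDual ℝ H).symm (L.comp (ContinuousLinearMap.single ℝ (fun _ : ι => H) j))
  have hL : ∀ v, L v = ∑ j, ⟪ξ j, v j⟫ := fun v => by
    simp only [ξ, InnerProductSpace.toDual_symm_apply, ContinuousLinearMap.comp_apply,
      ContinuousLinearMap.single_apply]
    rw [← map_sum, Finset.univ_sum_single]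
  simp only [charFunDual_apply, hL, mul_comm _ Complex.I]
  exact h ξ

section Interpolation

variable {d : ℕ} {x y : Ed d}

/-- The values of a path at the times `1/(N+1), …, N/(N+1)`. -/
def sample (N : ℕ) (ω : Omega2 x y) : Fin N → Ed d :=
  fun j => evalAt ω.1 (((j : ℝ) + 1) / (N + 1))

lemma continuous_sample (N : ℕ) : Continuous (sample N : Omega2 x y → Fin N → Ed d) :=
  continuous_pi fun _ => (continuous_eval_const _).comp continuous_subtype_val

variable (x y) in
/-- The piecewise linear path from `x` to `y` through the points `vs`. -/
def interp {N : ℕ} (vs : Fin N → Ed d) : Omega2 x y :=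
  pwLin2 x y (N + 1) (pinInc x y vs) (pin_telescope x y vs)

variable (x y) in
lemma continuous_interp (N : ℕ) : Continuous (interp x y : (Fin N → Ed d) → Omega2 x y) := by
  refine .subtype_mk (ContinuousMap.continuous_of_continuous_uncurry _ ?_) _
  refine continuous_const.add (continuous_finsetSum _ fun i _ => ?_)
  exact .smul (clamp01_continuous.comp (by fun_prop))
    ((continuous_pinInc x y i).comp continuous_fst)

lemma pinPts_sample {N : ℕ} (ω : Omega2 x y) {j : ℕ} (hj : j ≤ N + 1) :
    pinPts x y (sample N ω) j = evalAt ω.1 ((j : ℝ) / (N + 1)) := by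
  have hN : (N : ℝ) + 1 ≠ 0 := by positivity
  rcases j with _ | j
  · rw [pinPts_zero, evalAt, Nat.cast_zero, zero_div, Set.projIcc_left]
    exact ω.2.1.symm
  rcases hj.eq_or_lt with hlast | hlt
  · rw [hlast, pinPts_last, evalAt, Nat.cast_add_one, div_self hN, Set.projIcc_right]
    exact ω.2.2.symm
  · rw [pinPts_succ x y (sample N ω) ⟨j, by omega⟩, sample, Nat.cast_add_one]

lemma interp_apply {N : ℕ} (vs : Fin N → Ed d) (u : unitInterval) {k : ℕ}
    (hk : k ≤ N) (h1 : (k : ℝ) ≤ (N + 1) * u) (h2 : ((N : ℝ) + 1) * u ≤ k + 1) :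
    (interp x y vs).1 u = pinPts x y vs k
      + ((N + 1) * (u : ℝ) - k) • (pinPts x y vs (k + 1) - pinPts x y vs k) := by
  set p := pinPts x y vs
  obtain ⟨l, rfl⟩ := Nat.exists_eq_add_of_le hk
  have hsum : (interp x y vs).1 u
      = x + ∑ i ∈ Finset.range (k + 1 + l),
        clamp01 (((k + l : ℕ) + 1) * (u : ℝ) - i) • (p (i + 1) - p i) := by
    change x + ∑ i : Fin (k + l + 1), clamp01 ((k + l + 1 : ℕ) * (u : ℝ) - (i : ℕ)) •
      (p ((i : ℕ) + 1) - p (i : ℕ)) = _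
    rw [Fin.sum_univ_eq_sum_range (fun i => clamp01 ((k + l + 1 : ℕ) * (u : ℝ) - i) •
      (p (i + 1) - p i)), Nat.cast_add_one, Nat.add_right_comm]
  have hpast : ∑ i ∈ Finset.range k,
      clamp01 (((k + l : ℕ) + 1) * (u : ℝ) - i) • (p (i + 1) - p i) = p k - x := by
    rw [← pinPts_zero x y vs, ← Finset.sum_range_sub p]
    refine Finset.sum_congr rfl fun i hi => ?_
    have hik : (i : ℝ) + 1 ≤ k := by exact_mod_cast Finset.mem_range.mp hi
    rw [clamp01_of_one_le (by linarith), one_smul]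
  have hfuture : ∑ i ∈ Finset.range l,
      clamp01 (((k + l : ℕ) + 1) * (u : ℝ) - (k + 1 + i : ℕ)) •
        (p (k + 1 + i + 1) - p (k + 1 + i)) = 0 := by
    refine Finset.sum_eq_zero fun i _ => ?_
    rw [clamp01_of_nonpos, zero_smul]
    push_cast at h2 ⊢
    linarith [(Nat.cast_nonneg i : (0 : ℝ) ≤ i)]
  rw [hsum, Finset.sum_range_add, Finset.sum_range_succ, hpast, hfuture, clamp01,
    max_eq_right (by linarith), min_eq_right (by linarith)]
  abel

lemma dist_interp_sample_le {N : ℕ} {ω ω' : Omega2 x y} {ε : ℝ} (hε : 0 ≤ ε)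
    (h : ∀ u v : unitInterval, dist u v ≤ ((N : ℝ) + 1)⁻¹ → dist (ω'.1 u) (ω.1 v) ≤ ε) :
    dist (interp x y (sample N ω')) ω ≤ ε := by
  have hN : (0 : ℝ) < (N : ℝ) + 1 := by positivity
  rw [Subtype.dist_eq, ContinuousMap.dist_le hε]
  intro u
  obtain ⟨k, hk, h1, h2⟩ : ∃ k ≤ N, (k : ℝ) ≤ (N + 1) * u ∧ ((N : ℝ) + 1) * u ≤ k + 1 := by
    have hu0 : 0 ≤ ((N : ℝ) + 1) * u := mul_nonneg hN.le u.2.1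
    rcases le_total ⌊((N : ℝ) + 1) * u⌋₊ N with hle | hle
    · exact ⟨_, hle, Nat.floor_le hu0, (Nat.lt_floor_add_one _).le⟩
    · exact ⟨N, le_rfl, (Nat.le_floor_iff hu0).mp hle, mul_le_of_le_one_right hN.le u.2.2⟩
  have hnear : ∀ j : ℕ, j ≤ N + 1 → |((N : ℝ) + 1) * u - j| ≤ 1 →
      pinPts x y (sample N ω') j ∈ Metric.closedBall (ω.1 u) ε := by
    intro j hj hju
    have hmem : (j : ℝ) / (N + 1) ∈ Set.Icc (0 : ℝ) 1 :=
      ⟨by positivity, (div_le_one hN).mpr (by exact_mod_cast hj)⟩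
    have hsub : (u : ℝ) - (j : ℝ) / (N + 1) = (((N : ℝ) + 1) * u - j) / (N + 1) := by
      field_simp
    rw [pinPts_sample ω' hj]
    refine h _ _ ?_
    rw [Set.projIcc_of_mem zero_le_one hmem, dist_comm, Subtype.dist_eq, Real.dist_eq, hsub,
      abs_div, abs_of_pos hN, div_eq_mul_inv]
    exact mul_le_of_le_one_left (by positivity) hju
  rw [interp_apply _ u hk h1 h2]
  refine (convex_closedBall (ω.1 u) ε).add_smul_sub_mem (hnear k (by omega) ?_)
    (hnear (k + 1) (by omega) ?_) ⟨sub_nonneg.mpr h1, by linarith⟩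
  · rw [abs_le]
    constructor <;> linarith
  · rw [Nat.cast_add_one, abs_le]
    constructor <;> linarith

lemma tendsto_interp_sample {ι : Type*} {l : Filter ι} {n : ι → ℕ} (hn : Tendsto n l atTop)
    {ω' : ι → Omega2 x y} {ω : Omega2 x y} (hω : Tendsto ω' l (𝓝 ω)) :
    Tendsto (fun i => interp x y (sample (n i) (ω' i))) l (𝓝 ω) := by
  rw [Metric.tendsto_nhds]
  intro ε hε
  obtain ⟨δ, hδ, hωδ⟩ := Metric.uniformContinuous_iff.mp
    (CompactSpace.uniformContinuous_of_continuous ω.1.continuous) (ε / 3) (by positivity)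
  have hmesh : Tendsto (fun i => ((n i : ℝ) + 1)⁻¹) l (𝓝 0) :=
    (tendsto_one_div_add_atTop_nhds_zero_nat.comp hn).congr fun i => one_div _
  filter_upwards [hmesh.eventually (gt_mem_nhds hδ),
    Metric.tendsto_nhds.mp hω (ε / 3) (by positivity)] with i hi hωi
  have hclose : dist (interp x y (sample (n i) (ω' i))) ω ≤ ε / 3 + ε / 3 := by
    refine dist_interp_sample_le (by positivity) fun u v huv => ?_
    exact (dist_triangle _ (ω.1 u) _).trans
      (add_le_add ((ContinuousMap.dist_apply_le_dist u).trans hωi.le) (hωδ (huv.trans_lt hi)).le)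
  linarith

lemma ext_of_map_sample {μ ν : Measure (Omega2 x y)} [IsFiniteMeasure μ] [IsFiniteMeasure ν]
    (h : ∀ N, μ.map (sample N) = ν.map (sample N)) : μ = ν := by
  refine ext_of_forall_integral_eq_of_IsFiniteMeasure fun g => ?_
  have hg : ∀ N : ℕ, Continuous fun vs : Fin N → Ed d => g (interp x y vs) := fun N =>
    g.continuous.comp (continuous_interp x y N)
  have hlim : ∀ (ρ : Measure (Omega2 x y)) [IsFiniteMeasure ρ],
      Tendsto (fun N : ℕ => ∫ vs, g (interp x y vs) ∂ρ.map (sample N)) atTop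
        (𝓝 (∫ ω, g ω ∂ρ)) := by
    intro ρ _
    simp_rw [integral_map (continuous_sample _).measurable.aemeasurable
      (hg _).aestronglyMeasurable]
    exact tendsto_integral_of_dominated_convergence (fun _ => ‖g‖)
      (fun N => ((hg N).comp (continuous_sample N)).aestronglyMeasurable) (integrable_const _)
      (fun N => ae_of_all _ fun ω => g.norm_coe_le_norm _)
      (ae_of_all _ fun ω => (g.continuous.tendsto ω).comp
        (tendsto_interp_sample tendsto_id tendsto_const_nhds))
  exact tendsto_nhds_unique (hlim μ) (by simpa only [h] using hlim ν)

end Interpolation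

section BrownianScaling

variable {d : ℕ} {x y : Ed d}

variable (x y) in
/-- The straight path from `x` to `y`. -/
def straight : PathSp d :=
  ⟨fun u => (1 - (u : ℝ)) • x + (u : ℝ) • y, by fun_prop⟩

/-- Dilation by `c` of the deviation of a path from the straight path: Brownian scaling for
bridges. -/
def dilate (c : ℝ) (ω : Omega2 x y) : Omega2 x y :=
  ⟨straight x y + c • (ω.1 - straight x y), by simp [straight, ω.2.1], by
    simp [straight, ω.2.2]⟩

lemma continuous_dilate : Continuous fun p : ℝ × Omega2 x y => dilate p.1 p.2 :=
  .subtype_mk (by fun_prop) _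

lemma continuous_dilate_const (c : ℝ) : Continuous (dilate c : Omega2 x y → Omega2 x y) :=
  continuous_dilate.comp (Continuous.prodMk_right c)

lemma sample_dilate {N : ℕ} (c : ℝ) (ω : Omega2 x y) :
    sample N (dilate c ω) = c • sample N ω + (1 - c) • bridgeMean x y := by
  funext j
  have hmem : ((j : ℝ) + 1) / (N + 1) ∈ Set.Icc (0 : ℝ) 1 := by
    refine ⟨by positivity, (div_le_one (by positivity)).mpr ?_⟩
    exact_mod_cast Nat.succ_le_succ j.isLt.le
  simp only [sample, evalAt, dilate, straight, bridgeMean, Pi.add_apply, Pi.smul_apply,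
    ContinuousMap.add_apply, ContinuousMap.smul_apply, ContinuousMap.sub_apply,
    ContinuousMap.coe_mk, Set.projIcc_of_mem zero_le_one hmem]
  module

lemma bridgeVariance_smul {E : Type*} [NormedAddCommGroup E] [InnerProductSpace ℝ E] {N : ℕ}
    (c : ℝ) (ξ : Fin N → E) : bridgeVariance (c • ξ) = c ^ 2 * bridgeVariance ξ := by
  have hsq : ∀ v : E, ‖c • v‖ ^ 2 = c ^ 2 * ‖v‖ ^ 2 := fun v => by
    rw [norm_smul, mul_pow, Real.norm_eq_abs, sq_abs]
  simp only [bridgeVariance, Pi.smul_apply, smul_comm _ c, ← Finset.smul_sum, hsq,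
    ← Finset.mul_sum]
  ring

variable {Wt : ℝ → Measure (Omega2 x y)} {s t : ℝ}

namespace IsPinnedWienerFamily

lemma integral_cexp_sample (hWt : IsPinnedWienerFamily x y Wt) (ht : 0 < t) {N : ℕ}
    (ξ : Fin N → Ed d) :
    ∫ ω, Complex.exp (Complex.I * (∑ j, ⟪ξ j, sample N ω j⟫ : ℝ)) ∂(Wt t)
      = (heatKernel t (y - x) : ℂ) *
        Complex.exp (((-(t / 2) * bridgeVariance ξ : ℝ) : ℂ)
          + Complex.I * (∑ k, ⟪ξ k, bridgeMean x y k⟫ : ℝ)) := by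
  have hN : (0 : ℝ) < (N : ℝ) + 1 := by positivity
  have h := (hWt t ht).2 N (fun i => (i : ℝ) / (N + 1)) (by simp)
    (fun i _ => by gcongr; simp) ((div_lt_one hN).mpr (lt_add_one _)) ξ
  have hstep : ∀ i : ℕ, ((i : ℝ) + 1) / ((N : ℝ) + 1) - (i : ℝ) / (N + 1) = ((N : ℝ) + 1)⁻¹ :=
    fun i => by rw [← sub_div, add_sub_cancel_left, one_div]
  simpa only [Nat.cast_add_one, hstep, heatKernel, bridgeVariance, bridgeMean, sample,
    finrank_euclideanSpace_fin, norm_sub_rev x y] using h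

lemma map_sample (hWt : IsPinnedWienerFamily x y Wt) (hs : 0 < s) (N : ℕ) :
    (Wt (s * (N + 1))).map (sample N) = bridgeMeasure x y s N := by
  have ht : 0 < s * ((N : ℝ) + 1) := by positivity
  have := (hWt _ ht).1
  have := isFiniteMeasure_bridgeMeasure x y hs (N := N)
  refine ext_of_integral_cexp_sum_inner fun ξ => ?_
  rw [integral_map (continuous_sample N).measurable.aemeasurable
    (Continuous.aestronglyMeasurable (by fun_prop)), hWt.integral_cexp_sample ht,
    integral_cexp_bridgeMeasure x y hs]

lemma integral_cexp_sample_dilate (hWt : IsPinnedWienerFamily x y Wt) (ht : 0 ≤ t) {N : ℕ}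
    (ξ : Fin N → Ed d) :
    ∫ ω, Complex.exp (Complex.I * (∑ j, ⟪ξ j, sample N (dilate (√t) ω) j⟫ : ℝ)) ∂(Wt 1)
      = (heatKernel 1 (y - x) : ℂ) *
        Complex.exp (((-(t / 2) * bridgeVariance ξ : ℝ) : ℂ)
          + Complex.I * (∑ k, ⟪ξ k, bridgeMean x y k⟫ : ℝ)) := by
  have hphase : ∀ ω : Omega2 x y,
      Complex.exp (Complex.I * (∑ j, ⟪ξ j, sample N (dilate (√t) ω) j⟫ : ℝ))
      = Complex.exp (Complex.I * (∑ j, ⟪(√t • ξ) j, sample N ω j⟫ : ℝ)) *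
        Complex.exp (Complex.I * ((1 - √t) * ∑ k, ⟪ξ k, bridgeMean x y k⟫ : ℝ)) := by
    intro ω
    simp only [← Complex.exp_add, ← mul_add, ← Complex.ofReal_add, sample_dilate, Pi.add_apply,
      Pi.smul_apply, inner_add_right, inner_smul_right, real_inner_smul_left,
      Finset.sum_add_distrib, ← Finset.mul_sum]
  rw [funext hphase, integral_mul_const, hWt.integral_cexp_sample one_pos, bridgeVariance_smul,
    Real.sq_sqrt ht, mul_assoc, ← Complex.exp_add]
  simp only [Pi.smul_apply, real_inner_smul_left, ← Finset.mul_sum]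
  push_cast
  ring_nf

lemma eq_smul_map_dilate (hWt : IsPinnedWienerFamily x y Wt) (ht : 0 < t) :
    Wt t = ENNReal.ofReal (heatKernel t (y - x) / heatKernel 1 (y - x)) •
      (Wt 1).map (dilate √t) := by
  have := (hWt t ht).1
  have := (hWt 1 one_pos).1
  have : IsFiniteMeasure (ENNReal.ofReal (heatKernel t (y - x) / heatKernel 1 (y - x)) •
      (Wt 1).map (dilate √t)) := Measure.smul_finite _ ENNReal.ofReal_ne_top
  have hpos := heatKernel_pos ht (y - x)
  have hpos1 := heatKernel_pos one_pos (y - x)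
  have hdil : Measurable (dilate √t : Omega2 x y → Omega2 x y) :=
    (continuous_dilate_const √t).measurable
  refine ext_of_map_sample fun N => ?_
  have hsample : Measurable (sample N : Omega2 x y → Fin N → Ed d) :=
    (continuous_sample N).measurable
  refine ext_of_integral_cexp_sum_inner fun ξ => ?_
  rw [Measure.map_smul, Measure.map_map hsample hdil, integral_smul_measure,
    integral_map hsample.aemeasurable (Continuous.aestronglyMeasurable (by fun_prop)),
    integral_map (hsample.comp hdil).aemeasurable
      (Continuous.aestronglyMeasurable (by fun_prop)), hWt.integral_cexp_sample ht]
  simp only [Function.comp_apply]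
  rw [hWt.integral_cexp_sample_dilate ht.le, ENNReal.toReal_ofReal (by positivity),
    Complex.real_smul, ← mul_assoc, ← Complex.ofReal_mul, div_mul_cancel₀ _ hpos1.ne']

end IsPinnedWienerFamily

end BrownianScaling

section RiemannSums

variable {F : Type*} [NormedAddCommGroup F] [NormedSpace ℝ F] [CompleteSpace F]

lemma Ici_inter_preimage_floor_div_singleton {h : ℝ} (hh : 0 < h) (N : ℕ) :
    Set.Ici 0 ∩ (fun t : ℝ => ⌊t / h⌋₊) ⁻¹' {N} = Set.Ico (h * N) (h * (N + 1)) := by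
  ext t
  simp only [Set.mem_inter_iff, Set.mem_Ici, Set.mem_preimage, Set.mem_singleton_iff, Set.mem_Ico]
  have hfloor : 0 ≤ t → (⌊t / h⌋₊ = N ↔ h * N ≤ t ∧ t < h * (N + 1)) := fun ht => by
    rw [Nat.floor_eq_iff (by positivity), le_div_iff₀' hh, div_lt_iff₀' hh]
  constructor
  · rintro ⟨ht, hN⟩
    exact (hfloor ht).mp hN
  · intro hN
    have ht : 0 ≤ t := le_trans (by positivity) hN.1
    exact ⟨ht, (hfloor ht).mpr hN⟩

lemma hasSum_smul_of_integrableOn_floor {h : ℝ} (hh : 0 < h) {J : ℕ → F}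
    (hJ : IntegrableOn (fun t : ℝ => J ⌊t / h⌋₊) (Set.Ioi 0)) :
    HasSum (fun N => h • J N) (∫ t in Set.Ioi (0 : ℝ), J ⌊t / h⌋₊) := by
  let s : ℕ → Set ℝ := fun N => Set.Ici 0 ∩ (fun t : ℝ => ⌊t / h⌋₊) ⁻¹' {N}
  have hs : ∀ N, s N = Set.Ico (h * N) (h * (N + 1)) :=
    Ici_inter_preimage_floor_div_singleton hh
  have hmeas : ∀ N, MeasurableSet (s N) := fun N => hs N ▸ measurableSet_Ico
  have hdisj : Pairwise (Function.onFun Disjoint s) := fun i j hij =>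
    Set.disjoint_left.mpr fun t hi hj => hij (hi.2.symm.trans hj.2)
  have hunion : ⋃ N, s N = Set.Ici 0 := by
    ext t
    simp [s]
  have hsum := hasSum_integral_iUnion hmeas hdisj (f := fun t : ℝ => J ⌊t / h⌋₊) (μ := volume)
    (by rwa [hunion, integrableOn_Ici_iff_integrableOn_Ioi])
  rw [hunion, integral_Ici_eq_integral_Ioi] at hsum
  refine hsum.congr_fun fun N => ?_
  rw [setIntegral_congr_fun (hmeas N) (fun t ht => congrArg J ht.2), setIntegral_const, hs N,
    Real.volume_real_Ico_of_le (by gcongr; simp), mul_add_one, add_sub_cancel_left]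

lemma tendsto_tsum_smul_of_floor {ι : Type*} {l : Filter ι} [l.IsCountablyGenerated]
    {h : ι → ℝ} {J : ι → ℕ → F} {G : ℝ → F} {bound : ℝ → ℝ} (hh : ∀ᶠ i in l, 0 < h i)
    (hbound : ∀ᶠ i in l, ∀ t > 0, ‖J i ⌊t / h i⌋₊‖ ≤ bound t)
    (hint : IntegrableOn bound (Set.Ioi 0))
    (hlim : ∀ t > 0, Tendsto (fun i => J i ⌊t / h i⌋₊) l (𝓝 (G t))) :
    Tendsto (fun i => ∑' N, h i • J i N) l (𝓝 (∫ t in Set.Ioi (0 : ℝ), G t)) := by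
  have hmeas : ∀ i, AEStronglyMeasurable (fun t : ℝ => J i ⌊t / h i⌋₊)
      (volume.restrict (Set.Ioi 0)) := fun i =>
    ((StronglyMeasurable.of_discrete (f := J i)).comp_measurable
      (Nat.measurable_floor.comp (measurable_id.div_const _))).aestronglyMeasurable
  have hbound' : ∀ᶠ i in l, ∀ᵐ t ∂volume.restrict (Set.Ioi (0 : ℝ)),
      ‖J i ⌊t / h i⌋₊‖ ≤ bound t :=
    hbound.mono fun i hi => ae_restrict_of_forall_mem measurableSet_Ioi hi
  refine (tendsto_integral_filter_of_dominated_convergence bound (.of_forall hmeas) hbound' hint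
    (ae_restrict_of_forall_mem measurableSet_Ioi hlim)).congr' ?_
  filter_upwards [hh, hbound'] with i hi hbi
  exact (hasSum_smul_of_integrableOn_floor hi (hint.mono' (hmeas i) hbi)).tsum_eq.symm

end RiemannSums

section SmallSteps

lemma tendsto_sq_nhdsGT_zero : Tendsto (fun a : ℝ => a ^ 2) (𝓝[>] 0) (𝓝[>] 0) := by
  refine tendsto_nhdsWithin_iff.mpr
    ⟨?_, eventually_mem_nhdsWithin.mono fun a ha => pow_pos (Set.mem_Ioi.mp ha) 2⟩
  exact ((continuous_pow 2).tendsto' 0 0 (zero_pow two_ne_zero)).mono_left nhdsWithin_le_nhds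

lemma tendsto_one_sub_exp_neg_mul_div (c : ℝ) :
    Tendsto (fun h : ℝ => (1 - Real.exp (-c * h)) / h) (𝓝[≠] 0) (𝓝 c) := by
  have hderiv : HasDerivAt (fun h : ℝ => 1 - Real.exp (-c * h)) c 0 := by
    simpa using ((hasDerivAt_id (0 : ℝ)).const_mul (-c)).exp.const_sub 1
  exact hderiv.tendsto_slope.congr fun h => by simp [slope_def_field]

lemma tendsto_floor_div_nhdsGT_zero {t : ℝ} (ht : 0 < t) :
    Tendsto (fun h : ℝ => ⌊t / h⌋₊) (𝓝[>] 0) atTop :=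
  tendsto_nat_floor_atTop.comp (tendsto_inv_nhdsGT_zero.const_mul_atTop ht)

lemma lt_mul_floor_div_add_one {h : ℝ} (hh : 0 < h) (t : ℝ) : t < h * (⌊t / h⌋₊ + 1) :=
  (div_lt_iff₀' hh).mp (Nat.lt_floor_add_one _)

lemma tendsto_mul_floor_div_add_one {t : ℝ} (ht : 0 ≤ t) :
    Tendsto (fun h : ℝ => h * (⌊t / h⌋₊ + 1)) (𝓝[>] 0) (𝓝 t) := by
  have hupper : Tendsto (fun h : ℝ => t + h) (𝓝[>] 0) (𝓝 t) :=
    ((continuous_const_add t).tendsto' 0 t (add_zero t)).mono_left nhdsWithin_le_nhds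
  refine tendsto_of_tendsto_of_tendsto_of_le_of_le' tendsto_const_nhds hupper ?_ ?_
  · filter_upwards [self_mem_nhdsWithin] with h hh using (lt_mul_floor_div_add_one hh t).le
  · filter_upwards [self_mem_nhdsWithin] with h hh
    have hfloor := (le_div_iff₀' hh).mp (Nat.floor_le (div_nonneg ht (le_of_lt hh)))
    rw [mul_add_one]
    gcongr

end SmallSteps

section DiscretePinnedMeasures

variable {d : ℕ} {x y : Ed d} {a : ℝ}

lemma WxyaN_eq_map (x y : Ed d) (a : ℝ) (N : ℕ) :
    WxyaN x y a N = (bridgeMeasure x y (a ^ 2) N).map fun vs =>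
      ((a ^ 2 * (N + 1) : ℝ), interp x y vs) := by
  simp only [WxyaN, bridgeMeasure, heatKernel, finrank_euclideanSpace_fin]
  rfl

lemma WxyaN_univ (x y : Ed d) (ha : a ≠ 0) (N : ℕ) :
    WxyaN x y a N univ = ENNReal.ofReal (heatKernel (a ^ 2 * (N + 1)) (y - x)) := by
  rw [WxyaN_eq_map, Measure.map_apply
    (measurable_const.prodMk (continuous_interp x y N).measurable) .univ, preimage_univ,
    bridgeMeasure_univ x y (by positivity)]

lemma isFiniteMeasure_sum_ofReal_smul {ι α : Type*} [MeasurableSpace α] {μ : ι → Measure α}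
    {w : ι → ℝ} {C : ℝ≥0∞} (hw : Summable w) (hC : C ≠ ∞) (hμ : ∀ i, μ i univ ≤ C) :
    IsFiniteMeasure (Measure.sum fun i => ENNReal.ofReal (w i) • μ i) := by
  refine ⟨?_⟩
  calc Measure.sum (fun i => ENNReal.ofReal (w i) • μ i) univ
      = ∑' i, ENNReal.ofReal (w i) * μ i univ := Measure.sum_apply _ .univ
    _ ≤ ∑' i, ENNReal.ofReal (w i) * C := ENNReal.tsum_le_tsum fun i => by gcongr; exact hμ i
    _ = (∑' i, ENNReal.ofReal (w i)) * C := ENNReal.tsum_mul_right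
    _ < ∞ := ENNReal.mul_lt_top hw.tsum_ofReal_lt_top hC.lt_top

lemma integral_Wxya (hxy : x ≠ y) {m : ℝ} (hm : m ≠ 0) (ha : a ≠ 0)
    (f : BoundedContinuousFunction (ℝ × Omega2 x y) ℝ) :
    ∫ p, f p ∂Wxya x y m a = (1 - Real.exp (-m ^ 2 * a ^ 2 / 2)) *
      ∑' N : ℕ, Real.exp (-m ^ 2 * a ^ 2 * (N + 1) / 2) * ∫ p, f p ∂WxyaN x y a N := by
  obtain ⟨C, hC⟩ := exists_heatKernel_le (sub_ne_zero.mpr hxy.symm)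
  have hdecay : 0 < m ^ 2 * a ^ 2 / 2 := by positivity
  have hgeom : Summable fun N : ℕ => Real.exp (-m ^ 2 * a ^ 2 * (N + 1) / 2) := by
    refine ((summable_nat_add_iff 1).mpr
      (Real.summable_exp_nat_mul_iff.mpr (neg_lt_zero.mpr hdecay))).congr fun N => ?_
    rw [Nat.cast_add_one]
    ring_nf
  have := isFiniteMeasure_sum_ofReal_smul hgeom ENNReal.ofReal_ne_top fun N =>
    (WxyaN_univ x y ha N).trans_le (ENNReal.ofReal_le_ofReal (hC _ (by positivity)))
  have hweight : 0 ≤ 1 - Real.exp (-m ^ 2 * a ^ 2 / 2) := by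
    rw [sub_nonneg, Real.exp_le_one_iff]
    linarith
  rw [Wxya, integral_smul_measure, integral_sum_measure (f.integrable _),
    ENNReal.toReal_ofReal hweight, smul_eq_mul]
  simp_rw [integral_smul_measure, ENNReal.toReal_ofReal (Real.exp_pos _).le, smul_eq_mul]

lemma exists_norm_integral_WxyaN_le (hxy : x ≠ y)
    (f : BoundedContinuousFunction (ℝ × Omega2 x y) ℝ) :
    ∃ K, ∀ a > 0, ∀ N, ‖∫ p, f p ∂WxyaN x y a N‖ ≤ K := by
  obtain ⟨C, hC⟩ := exists_heatKernel_le (sub_ne_zero.mpr hxy.symm)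
  refine ⟨‖f‖ * C, fun a ha N => ?_⟩
  have ht : 0 < a ^ 2 * ((N : ℝ) + 1) := by positivity
  have hmass : (WxyaN x y a N).real univ = heatKernel (a ^ 2 * (N + 1)) (y - x) := by
    rw [measureReal_def, WxyaN_univ x y ha.ne', ENNReal.toReal_ofReal (heatKernel_pos ht _).le]
  have : IsFiniteMeasure (WxyaN x y a N) := ⟨by simp [WxyaN_univ x y ha.ne']⟩
  calc ‖∫ p, f p ∂WxyaN x y a N‖
      ≤ ‖f‖ * (WxyaN x y a N).real univ :=
        norm_integral_le_of_norm_le_const (ae_of_all _ f.norm_coe_le_norm)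
    _ ≤ ‖f‖ * C := by
        rw [hmass]
        gcongr
        exact hC _ ht

lemma tendsto_integral_interp_sample_dilate (μ : Measure (Omega2 x y)) [IsFiniteMeasure μ]
    (f : BoundedContinuousFunction (ℝ × Omega2 x y) ℝ) {ι : Type*} {l : Filter ι}
    [l.IsCountablyGenerated] {n : ι → ℕ} (hn : Tendsto n l atTop) {s : ι → ℝ} {t : ℝ}
    (hs : Tendsto s l (𝓝 t)) :
    Tendsto (fun i => ∫ ω, f (s i, interp x y (sample (n i) (dilate √(s i) ω))) ∂μ) l
      (𝓝 (∫ ω, f (t, dilate √t ω) ∂μ)) := by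
  refine tendsto_integral_filter_of_dominated_convergence (fun _ => ‖f‖) (.of_forall fun i => ?_)
    (.of_forall fun i => ae_of_all _ fun ω => f.norm_coe_le_norm _)
    (integrable_const _) (ae_of_all _ fun ω => ?_)
  · have hpath : Continuous fun ω : Omega2 x y =>
        interp x y (sample (n i) (dilate √(s i) ω)) :=
      (continuous_interp x y _).comp ((continuous_sample _).comp (continuous_dilate_const _))
    exact (f.continuous.comp (continuous_const.prodMk hpath)).aestronglyMeasurable
  · have hdilate : Tendsto (fun i => dilate √(s i) ω) l (𝓝 (dilate √t ω)) :=
      ((continuous_dilate.comp (Continuous.prodMk_left ω)).tendsto _).comp hs.sqrt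
    exact (f.continuous.tendsto _).comp (hs.prodMk_nhds (tendsto_interp_sample hn hdilate))

namespace IsPinnedWienerFamily

variable {Wt : ℝ → Measure (Omega2 x y)}

lemma integral_eq (hWt : IsPinnedWienerFamily x y Wt) {t : ℝ} (ht : 0 < t)
    {g : Omega2 x y → ℝ} (hg : Continuous g) :
    ∫ ω, g ω ∂Wt t = heatKernel t (y - x) / heatKernel 1 (y - x) *
      ∫ ω, g (dilate √t ω) ∂Wt 1 := by
  have h1 := heatKernel_pos one_pos (y - x)
  have ht' := heatKernel_pos ht (y - x)
  rw [hWt.eq_smul_map_dilate ht, integral_smul_measure, integral_map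
    (continuous_dilate_const √t).measurable.aemeasurable hg.aestronglyMeasurable,
    ENNReal.toReal_ofReal (by positivity), smul_eq_mul]

lemma integral_WxyaN (hWt : IsPinnedWienerFamily x y Wt) (ha : a ≠ 0) (N : ℕ)
    {f : ℝ × Omega2 x y → ℝ} (hf : Continuous f) :
    ∫ p, f p ∂WxyaN x y a N
      = ∫ ω, f (a ^ 2 * (N + 1), interp x y (sample N ω)) ∂Wt (a ^ 2 * (N + 1)) := by
  have hinterp : Continuous fun vs : Fin N → Ed d => ((a ^ 2 * (N + 1) : ℝ), interp x y vs) :=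
    continuous_const.prodMk (continuous_interp x y N)
  rw [WxyaN_eq_map, ← hWt.map_sample (by positivity), Measure.map_map hinterp.measurable
    (continuous_sample N).measurable, integral_map
    (hinterp.comp (continuous_sample N)).measurable.aemeasurable
    hf.measurable.aestronglyMeasurable]
  rfl

/-- Brownian scaling turns the varying measures into the single measure `Wt 1`, to which
dominated convergence applies. -/
lemma tendsto_integral_WxyaN (hWt : IsPinnedWienerFamily x y Wt) {t : ℝ} (ht : 0 < t)
    (f : BoundedContinuousFunction (ℝ × Omega2 x y) ℝ) :
    Tendsto (fun a : ℝ => ∫ p, f p ∂WxyaN x y a ⌊t / a ^ 2⌋₊) (𝓝[>] 0)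
      (𝓝 (∫ ω, f (t, ω) ∂Wt t)) := by
  have := (hWt 1 one_pos).1
  have hn : Tendsto (fun a : ℝ => ⌊t / a ^ 2⌋₊) (𝓝[>] 0) atTop :=
    (tendsto_floor_div_nhdsGT_zero ht).comp tendsto_sq_nhdsGT_zero
  have hs : Tendsto (fun a : ℝ => a ^ 2 * ((⌊t / a ^ 2⌋₊ : ℝ) + 1)) (𝓝[>] 0) (𝓝 t) :=
    (tendsto_mul_floor_div_add_one ht.le).comp tendsto_sq_nhdsGT_zero
  rw [hWt.integral_eq ht (g := fun ω => f (t, ω)) (f.continuous.comp (.prodMk_right t))]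
  refine ((((continuousAt_heatKernel ht (y - x)).tendsto.comp hs).div_const _).mul
    (tendsto_integral_interp_sample_dilate (Wt 1) f hn hs)).congr' ?_
  filter_upwards [self_mem_nhdsWithin] with a ha
  have ha0 : 0 < a := ha
  have hpath : Continuous fun ω : Omega2 x y => interp x y (sample ⌊t / a ^ 2⌋₊ ω) :=
    (continuous_interp x y _).comp (continuous_sample _)
  rw [hWt.integral_WxyaN ha0.ne' _ f.continuous, hWt.integral_eq (by positivity)
    (g := fun ω => f (a ^ 2 * (⌊t / a ^ 2⌋₊ + 1), interp x y (sample ⌊t / a ^ 2⌋₊ ω)))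
    (f.continuous.comp (continuous_const.prodMk hpath))]
  rfl

lemma tendsto_tsum_integral_WxyaN (hWt : IsPinnedWienerFamily x y Wt) (hxy : x ≠ y) {c : ℝ}
    (hc : 0 < c) (f : BoundedContinuousFunction (ℝ × Omega2 x y) ℝ) :
    Tendsto (fun a : ℝ => ∑' N : ℕ,
        a ^ 2 • (Real.exp (-c * (a ^ 2 * (N + 1))) * ∫ p, f p ∂WxyaN x y a N)) (𝓝[>] 0)
      (𝓝 (∫ t in Set.Ioi (0 : ℝ), Real.exp (-c * t) * ∫ ω, f (t, ω) ∂Wt t)) := by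
  obtain ⟨K, hK⟩ := exists_norm_integral_WxyaN_le hxy f
  refine tendsto_tsum_smul_of_floor (bound := fun t => Real.exp (-c * t) * K) ?_ ?_
    ((exp_neg_integrableOn_Ioi 0 hc).mul_const K) fun t ht => ?_
  · filter_upwards [self_mem_nhdsWithin] with a ha using pow_pos ha 2
  · filter_upwards [self_mem_nhdsWithin] with a ha t _
    have hlt := lt_mul_floor_div_add_one (pow_pos ha 2) t
    rw [norm_mul, Real.norm_of_nonneg (Real.exp_pos _).le]
    refine mul_le_mul (Real.exp_le_exp.mpr ?_) (hK a ha _) (norm_nonneg _) (Real.exp_pos _).le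
    rw [neg_mul, neg_mul, neg_le_neg_iff]
    gcongr
  · refine Tendsto.mul ?_ (hWt.tendsto_integral_WxyaN ht f)
    exact (Real.continuous_exp.tendsto _).comp (((tendsto_mul_floor_div_add_one (le_of_lt ht)).comp
      tendsto_sq_nhdsGT_zero).const_mul (-c))

end IsPinnedWienerFamily

end DiscretePinnedMeasures

/-- **Theorem 3.3 (piecewise-linear case)**: `W_{x,y,a} → (m²/2) W_{x,y}` weakly as
`a → 0⁺`, where `W_{x,y}(B) = ∫_0^∞ e^{-m²t/2} W_{x,y}^t(B_t) dt`. -/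
theorem Wxya_tendsto_weakly (d : ℕ) (hd : 1 ≤ d) (m : ℝ) (hm : 0 < m)
    (x y : Ed d) (hxy : x ≠ y)
    (Wt : ℝ → Measure (Omega2 x y)) (hWt : IsPinnedWienerFamily x y Wt) :
    ∀ f : BoundedContinuousFunction (ℝ × Omega2 x y) ℝ,
      Tendsto (fun a : ℝ => ∫ p, f p ∂(Wxya x y m a)) (nhdsWithin 0 (Set.Ioi 0))
        (nhds ((m ^ 2 / 2) *
          ∫ t in Set.Ioi (0 : ℝ), Real.exp (-m ^ 2 * t / 2) * ∫ ω, f (t, ω) ∂(Wt t))) := by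
  intro f
  have hrate : Tendsto (fun a : ℝ => (1 - Real.exp (-(m ^ 2 / 2) * a ^ 2)) / a ^ 2) (𝓝[>] 0)
      (𝓝 (m ^ 2 / 2)) :=
    (tendsto_one_sub_exp_neg_mul_div _).comp
      (tendsto_sq_nhdsGT_zero.mono_right (nhdsGT_le_nhdsNE 0))
  have hsum := hWt.tendsto_tsum_integral_WxyaN hxy (half_pos (pow_pos hm 2)) f
  have hexp : ∀ r : ℝ, -(m ^ 2 / 2) * r = -m ^ 2 * r / 2 := fun r => by ring
  simp only [hexp, ← mul_assoc] at hrate hsum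
  refine (hrate.mul hsum).congr' ?_
  filter_upwards [self_mem_nhdsWithin] with a ha
  have ha0 : a ≠ 0 := ne_of_gt ha
  rw [integral_Wxya hxy hm.ne' ha0, tsum_const_smul'', smul_eq_mul, ← mul_assoc,
    div_mul_cancel₀ _ (pow_ne_zero 2 ha0)]

end
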